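/- (Correctness of symmetry pruning.) Let d = ((t_1,y_1),…,(t_ℓ,y_ℓ)) be a rule list whose last term is the constant-true term, and let 1 ≤ i < j ≤ ℓ be such that the consecutive rules r_i, r_{i+1}, …, r_j all have the same label, i.e., y_i = y_{i+1} = … = y_j. Then for any permutation σ of the index set {i,…,j}, the rule list d' obtained from d by replacing the block (r_i,…,r_j) with (r_{σ(i)},…,r_{σ(j)}) satisfies h_{d'}(x) = h_d(x) for every input x ∈ X. -/

import Mathlib

/-- Input domain `X = {0,1}^J`. -/
abbrev Input (J : ℕ) := Fin J → Bool

/-- A term over `X = {0,1}^J` is a function `t : X → {0,1}`. -/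
abbrev Term (J : ℕ) := Input J → Bool

/-- A rule is a pair `(t, y)` of a term and a label. -/
abbrev Rule (J : ℕ) := Term J × Bool

/-- The classifier `h_d` of a rule list `d`: it predicts `y_i` for the least
index `i` with `t_i(x) = 1`. -/
def predict {J : ℕ} : List (Rule J) → Input J → Bool
  | [], _ => false
  | (t, y) :: rest, x => if t x then y else predict rest x

/-!
The prediction of a list is decided by its first part as soon as some rule there fires on the input,
and it is then the label of one of the firing rules. If all firing rules of a block agree on their
label, neither whether the block decides nor what it decides depends on the order or multiplicity
of its rules.
-/

section Predict

variable {J : ℕ} {x : Input J}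

theorem predict_append (l l' : List (Rule J)) (x : Input J) :
    predict (l ++ l') x = if ∃ r ∈ l, r.1 x then predict l x else predict l' x := by
  induction l with
  | nil => simp
  | cons r l ih =>
    obtain ⟨t, z⟩ := r
    by_cases ht : t x <;> simp [predict, ht, ih]

theorem exists_mem_predict_eq_label {l : List (Rule J)} (hfire : ∃ r ∈ l, r.1 x) :
    ∃ r ∈ l, r.1 x ∧ predict l x = r.2 := by
  induction l with
  | nil => simp at hfire
  | cons r l ih =>
    obtain ⟨t, z⟩ := r
    by_cases ht : t x
    · exact ⟨(t, z), List.mem_cons_self, ht, by simp [predict, ht]⟩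
    · obtain ⟨s, hs, hsx, hpred⟩ := ih (by simpa [ht] using hfire)
      exact ⟨s, List.mem_cons_of_mem _ hs, hsx, by simpa [predict, ht] using hpred⟩

theorem predict_eq_of_mem_iff {b b' : List (Rule J)} (hmem : ∀ r, r ∈ b' ↔ r ∈ b)
    (hagree : ∀ r ∈ b, ∀ s ∈ b, r.1 x → s.1 x → r.2 = s.2) (hfire : ∃ r ∈ b, r.1 x) :
    predict b' x = predict b x := by
  have hfire' : ∃ r ∈ b', r.1 x := by simpa only [hmem] using hfire
  obtain ⟨r, hr, hrx, hpred⟩ := exists_mem_predict_eq_label hfire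
  obtain ⟨s, hs, hsx, hpred'⟩ := exists_mem_predict_eq_label hfire'
  rw [hpred, hpred', hagree s ((hmem s).1 hs) r hr hsx hrx]

theorem symmetry_pruning_correct_general (a c : List (Rule J)) {b b' : List (Rule J)}
    (hmem : ∀ r, r ∈ b' ↔ r ∈ b)
    (hagree : ∀ r ∈ b, ∀ s ∈ b, r.1 x → s.1 x → r.2 = s.2) :
    predict (a ++ b' ++ c) x = predict (a ++ b ++ c) x := by
  have hblock : predict (b' ++ c) x = predict (b ++ c) x := by
    simp only [predict_append, hmem]
    split_ifs with hfire
    · exact predict_eq_of_mem_iff hmem hagree hfire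
    · rfl
  rw [List.append_assoc, List.append_assoc, predict_append a, predict_append a, hblock]

end Predict

/-- correctness of symmetry pruning: if a block `b` of
consecutive rules of a rule list `d = a ++ b ++ c` (of block length ≥ 2,
corresponding to indices `i < j`) all carry the same label `y`, then
permuting the block by any permutation `σ` does not change the classifier:
`h_{d'}(x) = h_d(x)` for every input `x`. -/
theorem symmetry_pruning_correct {J : ℕ} (a b c : List (Rule J)) (y : Bool)
    (hblock : 2 ≤ b.length)
    (hy : ∀ r ∈ b, r.2 = y)
    (hne : a ++ b ++ c ≠ [])
    (hlast : ((a ++ b ++ c).getLast hne).1 = fun _ => true)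
    (σ : Equiv.Perm (Fin b.length)) :
    ∀ x : Input J,
      predict (a ++ (List.ofFn fun k => b.get (σ k)) ++ c) x
        = predict (a ++ b ++ c) x := by
  have hperm : (List.ofFn fun k => b.get (σ k)).Perm b := by
    simpa only [List.ofFn_get, Function.comp_def] using σ.ofFn_comp_perm b.get
  exact fun x => symmetry_pruning_correct_general a c (fun _ => hperm.mem_iff)
    fun r hr s hs _ _ => (hy r hr).trans (hy s hs).symm
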